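/- arXiv:1811.10809 — 9 statements merged into one kernel-verified Lean document; each statement's English description precedes it below -/
import Mathlib

section
/- Let H be a real Hilbert space, (u i)_{i∈ℕ} a Hilbert basis of H, and λ : ℕ → ℝ a nonincreasing (antitone) sequence of strictly positive reals. Fix r > 0, f ∈ H, and suppose the family i ↦ (λ i)^(-r) · ⟪u i, f⟫² is summable with ∑'_{i∈ℕ} (λ i)^(-r) · ⟪u i, f⟫² ≤ C². Then for every n ∈ ℕ, ‖f − ∑_{i<n} ⟪u i, f⟫ • u i‖ ≤ (λ n)^(r/2) · C. Moreover, if s > r > 0 and ∑'_{i∈ℕ} (λ i)^(-s) · ⟪u i, f⟫² ≤ D², then ∑'_{i≥n} (λ i)^(-r) · ⟪u i, f⟫² ≤ (λ n)^(s−r) · D². (Projection error estimate in spectral approximation spaces, Theorem 3.1 of the paper and the remark following it.) -/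
/-! Since `l` is antitone, for `q ≤ p` and `i ≥ n` one has
`(l i) ^ (-q) = (l i) ^ (p - q) * (l i) ^ (-p) ≤ (l n) ^ (p - q) * (l i) ^ (-p)`. Summing against
nonnegative weights over `i ≥ n` bounds the tail of the order `q` seminorm by `(l n) ^ (p - q)`
times the full order `p` seminorm (`tsum_tail_rpow_le`). With `q = 0`, `p = r` this is the
projection error estimate, the squared residual being the tail sum of the squared coefficients by
Parseval (`norm_sub_partial_sum_sq`); with `q = r`, `p = s` it is the second estimate. -/

open scoped RealInnerProductSpace

theorem tsum_tail_rpow_le {l c : ℕ → ℝ} (hl : ∀ i, 0 < l i) (hanti : Antitone l)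
    (hc : ∀ i, 0 ≤ c i) {q p B : ℝ} (hqp : q ≤ p)
    (hsum : Summable fun i => (l i) ^ (-p) * c i) (hle : ∑' i, (l i) ^ (-p) * c i ≤ B) (n : ℕ) :
    ∑' i, {i | n ≤ i}.indicator (fun i => (l i) ^ (-q) * c i) i ≤ (l n) ^ (p - q) * B := by
  have hpos : ∀ i t, 0 ≤ (l i) ^ (t : ℝ) := fun i t => Real.rpow_nonneg (hl i).le t
  have hpt : ∀ i, {i | n ≤ i}.indicator (fun i => (l i) ^ (-q) * c i) i ≤
      (l n) ^ (p - q) * ((l i) ^ (-p) * c i) := by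
    intro i
    refine Set.indicator_apply_le' (fun hi => ?_)
      (fun _ => mul_nonneg (hpos _ _) (mul_nonneg (hpos _ _) (hc i)))
    have hsplit : (l i) ^ (-q) = (l i) ^ (p - q) * (l i) ^ (-p) := by
      rw [← Real.rpow_add (hl i)]
      congr 1
      ring
    rw [hsplit, mul_assoc]
    exact mul_le_mul_of_nonneg_right
      (Real.rpow_le_rpow (hl i).le (hanti hi) (sub_nonneg.2 hqp)) (mul_nonneg (hpos _ _) (hc i))
  have hbig := hsum.mul_left ((l n) ^ (p - q))
  have hsmall := Summable.of_nonneg_of_le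
    (fun i => Set.indicator_nonneg (fun j _ => mul_nonneg (hpos j (-q)) (hc j)) i) hpt hbig
  calc _ ≤ ∑' i, (l n) ^ (p - q) * ((l i) ^ (-p) * c i) := hsmall.tsum_le_tsum hpt hbig
    _ = (l n) ^ (p - q) * ∑' i, (l i) ^ (-p) * c i := tsum_mul_left
    _ ≤ _ := mul_le_mul_of_nonneg_left hle (hpos _ _)

/-- Parseval's identity for the residual, whose coefficients vanish for `i < n` and agree with
those of `f` for `i ≥ n`. -/
theorem norm_sub_partial_sum_sq {H : Type*} [NormedAddCommGroup H] [InnerProductSpace ℝ H]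
    (b : HilbertBasis ℕ ℝ H) (f : H) (n : ℕ) :
    ‖f - ∑ i ∈ Finset.range n, ⟪b i, f⟫ • b i‖ ^ 2 =
      ∑' i, {i | n ≤ i}.indicator (fun i => ⟪b i, f⟫ ^ 2) i := by
  have hcoef : ∀ i, ⟪b i, f - ∑ j ∈ Finset.range n, ⟪b j, f⟫ • b j⟫ =
      {i | n ≤ i}.indicator (fun i => ⟪b i, f⟫) i := by
    intro i
    have horth := orthonormal_iff_ite.1 b.orthonormal
    by_cases hi : n ≤ i
    · simp [inner_sub_right, inner_sum, inner_smul_right, horth, hi]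
    · simp [inner_sub_right, inner_sum, inner_smul_right, horth, hi, not_le.1 hi]
  rw [← real_inner_self_eq_norm_sq, ← b.tsum_inner_mul_inner]
  refine tsum_congr fun i => ?_
  rw [real_inner_comm, hcoef]
  by_cases hi : n ≤ i <;> simp [hi, sq]

/-- Projection error estimate in spectral approximation spaces
(Theorem 3.1 of the paper and the remark following it). -/
theorem spectral_approx_projection_error
    {H : Type*} [NormedAddCommGroup H] [InnerProductSpace ℝ H] [CompleteSpace H]
    (b : HilbertBasis ℕ ℝ H)
    (l : ℕ → ℝ) (hl : ∀ i, 0 < l i) (hanti : Antitone l)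
    (r : ℝ) (hr : 0 < r) (f : H) (C : ℝ) (hC : 0 ≤ C)
    (hsum : Summable fun i => (l i) ^ (-r) * ⟪b i, f⟫ ^ 2)
    (hle : ∑' i, (l i) ^ (-r) * ⟪b i, f⟫ ^ 2 ≤ C ^ 2) :
    (∀ n : ℕ,
        ‖f - ∑ i ∈ Finset.range n, ⟪b i, f⟫ • b i‖ ≤ (l n) ^ (r / 2) * C) ∧
    (∀ s D : ℝ, r < s →
        (Summable fun i => (l i) ^ (-s) * ⟪b i, f⟫ ^ 2) →
        (∑' i, (l i) ^ (-s) * ⟪b i, f⟫ ^ 2 ≤ D ^ 2) →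
        ∀ n : ℕ,
          ∑' i : {i : ℕ // n ≤ i}, (l i.1) ^ (-r) * ⟪b i.1, f⟫ ^ 2 ≤
            (l n) ^ (s - r) * D ^ 2) := by
  refine ⟨fun n => ?_, fun s D hs hsum' hle' n => ?_⟩
  · refine (sq_le_sq₀ (norm_nonneg _) (mul_nonneg (Real.rpow_nonneg (hl n).le _) hC)).1 ?_
    have htail := tsum_tail_rpow_le hl hanti (fun i => sq_nonneg ⟪b i, f⟫) hr.le hsum hle n
    simp only [neg_zero, Real.rpow_zero, one_mul, sub_zero] at htail
    rw [norm_sub_partial_sum_sq, mul_pow, ← Real.rpow_mul_natCast (hl n).le]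
    simpa using htail
  · have htail := tsum_tail_rpow_le hl hanti (fun i => sq_nonneg ⟪b i, f⟫) hs.le hsum' hle' n
    rwa [← tsum_subtype] at htail
end

section
/- Let H be a real Hilbert space, (u i)_{i∈ℕ} a Hilbert basis of H, λ : ℕ → ℝ a nonincreasing sequence of strictly positive reals, r > 0, and p : ℕ → ℝ a bounded sequence. For f ∈ H set P f := ∑'_{i} p i · ⟪u i, f⟫ • u i and P_n f := ∑_{i<n} p i · ⟪u i, f⟫ • u i. If the family i ↦ (λ i)^(-r) · (p i · ⟪u i, f⟫)² is summable with sum at most C², then ‖P f − P_n f‖ ≤ (λ n)^(r/2) · C for every n. In particular: (1) if |p i| ≤ B for all i and ∑'_i (λ i)^(-r) ⟪u i,f⟫² ≤ D², the bound holds with C = B·D; (2) if ∑'_i (λ i)^(-r)(p i)² ≤ E², the bound holds with C = E·‖f‖. (Theorem 3.4, main error estimate for diagonal Perron–Frobenius operators over the spectral approximation spaces.) -/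
/-!
The first bound is an orthogonal tail estimate. Since `l` is nonincreasing, `l i ^ r ≤ l n ^ r` for
`i ≥ n`, so with coefficients `a i = p i * ⟪b i, f⟫` the squared norm of the tail is
`∑_{i ≥ n} a i ^ 2 ≤ l n ^ r * ∑_{i ≥ n} l i ^ (-r) * a i ^ 2 ≤ l n ^ r * C ^ 2`
(`norm_tsum_sub_sum_range_le`). The two particular cases reduce to this one by the termwise bounds
`(p i * ⟪b i, f⟫) ^ 2 ≤ B ^ 2 * ⟪b i, f⟫ ^ 2` and `(p i * ⟪b i, f⟫) ^ 2 ≤ ‖f‖ ^ 2 * p i ^ 2`.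
-/

open scoped RealInnerProductSpace

lemma sq_le_rpow_mul_weighted {l : ℕ → ℝ} (hl : ∀ i, 0 < l i) (hanti : Antitone l)
    {r : ℝ} (hr : 0 < r) (a : ℕ → ℝ) {n i : ℕ} (hni : n ≤ i) :
    a i ^ 2 ≤ l n ^ r * (l i ^ (-r) * a i ^ 2) := by
  have h1 : l i ^ r ≤ l n ^ r := Real.rpow_le_rpow (hl i).le (hanti hni) hr.le
  have h2 : l i ^ r * l i ^ (-r) = 1 := by
    rw [← Real.rpow_add (hl i), add_neg_cancel, Real.rpow_zero]
  have h3 : 0 ≤ l i ^ (-r) * a i ^ 2 :=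
    mul_nonneg (Real.rpow_nonneg (hl i).le _) (sq_nonneg _)
  calc a i ^ 2 = l i ^ r * (l i ^ (-r) * a i ^ 2) := by rw [← mul_assoc, h2, one_mul]
    _ ≤ _ := mul_le_mul_of_nonneg_right h1 h3

lemma norm_sq_sum_smul {H : Type*} [NormedAddCommGroup H] [InnerProductSpace ℝ H]
    {v : ℕ → H} (hv : Orthonormal ℝ v) (a : ℕ → ℝ) (s : Finset ℕ) :
    ‖∑ i ∈ s, a i • v i‖ ^ 2 = ∑ i ∈ s, a i ^ 2 := by
  rw [← real_inner_self_eq_norm_sq, hv.inner_sum]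
  simp [sq]

/-- The truncation error of an orthogonal expansion whose coefficients have finite weighted
square sum. The weights `l i ^ (-r)` are bounded below by `l 0 ^ (-r) > 0`, so the weighted
condition alone forces convergence of the series and no other bound on `a` is needed. -/
lemma norm_tsum_sub_sum_range_le {H : Type*} [NormedAddCommGroup H] [InnerProductSpace ℝ H]
    [CompleteSpace H] {v : ℕ → H} (hv : Orthonormal ℝ v)
    {l : ℕ → ℝ} (hl : ∀ i, 0 < l i) (hanti : Antitone l)
    {r : ℝ} (hr : 0 < r) (a : ℕ → ℝ) {C : ℝ} (hC : 0 ≤ C)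
    (hs : Summable fun i => l i ^ (-r) * a i ^ 2)
    (hle : ∑' i, l i ^ (-r) * a i ^ 2 ≤ C ^ 2) (n : ℕ) :
    ‖(∑' i, a i • v i) - ∑ i ∈ Finset.range n, a i • v i‖ ≤ l n ^ (r / 2) * C := by
  have hsq : Summable fun i => a i ^ 2 :=
    Summable.of_nonneg_of_le (fun i => sq_nonneg _)
      (fun i => sq_le_rpow_mul_weighted hl hanti hr a (Nat.zero_le i)) (hs.mul_left _)
  have hsum : Summable fun i => a i • v i := by
    have := hv.orthogonalFamily.summable_iff_norm_sq_summable (f := a)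
    simpa using this.2 (by simpa using hsq)
  have hlim := (hsum.hasSum.tendsto_sum_nat.sub_const
    (∑ i ∈ Finset.range n, a i • v i)).norm
  refine le_of_tendsto hlim ?_
  filter_upwards [Filter.eventually_ge_atTop n] with N hN
  rw [← Finset.sum_Ico_eq_sub _ hN]
  have hln : 0 ≤ l n ^ (r / 2) := Real.rpow_nonneg (hl n).le _
  refine le_of_sq_le_sq ?_ (mul_nonneg hln hC)
  have hpow : (l n ^ (r / 2)) ^ 2 = l n ^ r := by
    rw [sq, ← Real.rpow_add (hl n), add_halves]
  rw [norm_sq_sum_smul hv, mul_pow, hpow]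
  calc ∑ i ∈ Finset.Ico n N, a i ^ 2
      ≤ ∑ i ∈ Finset.Ico n N, l n ^ r * (l i ^ (-r) * a i ^ 2) :=
        Finset.sum_le_sum fun i hi =>
          sq_le_rpow_mul_weighted hl hanti hr a (Finset.mem_Ico.1 hi).1
    _ = l n ^ r * ∑ i ∈ Finset.Ico n N, l i ^ (-r) * a i ^ 2 := (Finset.mul_sum ..).symm
    _ ≤ l n ^ r * C ^ 2 := by
        refine mul_le_mul_of_nonneg_left (le_trans ?_ hle) (Real.rpow_nonneg (hl n).le _)
        exact hs.sum_le_tsum _ fun i _ =>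
          mul_nonneg (Real.rpow_nonneg (hl i).le _) (sq_nonneg _)

/-- Weighted square sums are monotone under a termwise bound `a i ^ 2 ≤ K ^ 2 * c i ^ 2`. -/
lemma weighted_summable_and_tsum_le {w a c : ℕ → ℝ} (hw : ∀ i, 0 ≤ w i) {K D : ℝ}
    (hac : ∀ i, a i ^ 2 ≤ K ^ 2 * c i ^ 2)
    (hs : Summable fun i => w i * c i ^ 2) (hle : ∑' i, w i * c i ^ 2 ≤ D ^ 2) :
    (Summable fun i => w i * a i ^ 2) ∧ ∑' i, w i * a i ^ 2 ≤ (K * D) ^ 2 := by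
  have hterm : ∀ i, w i * a i ^ 2 ≤ K ^ 2 * (w i * c i ^ 2) := fun i =>
    (mul_le_mul_of_nonneg_left (hac i) (hw i)).trans_eq (by ring)
  have hsum : Summable fun i => w i * a i ^ 2 :=
    Summable.of_nonneg_of_le (fun i => mul_nonneg (hw i) (sq_nonneg _)) hterm (hs.mul_left _)
  refine ⟨hsum, ?_⟩
  calc ∑' i, w i * a i ^ 2 ≤ ∑' i, K ^ 2 * (w i * c i ^ 2) :=
        hsum.tsum_le_tsum hterm (hs.mul_left _)
    _ = K ^ 2 * ∑' i, w i * c i ^ 2 := tsum_mul_left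
    _ ≤ K ^ 2 * D ^ 2 := mul_le_mul_of_nonneg_left hle (sq_nonneg _)
    _ = (K * D) ^ 2 := (mul_pow ..).symm

/-- Theorem 3.4, main error estimate for diagonal Perron–Frobenius operators over the
spectral approximation spaces: `‖P f − P_n f‖ ≤ λ_n^{r/2} C` whenever
`∑' (λ i)^{-r} (p_i ⟪u_i,f⟫)² ≤ C²`, with the two particular cases
`C = B·D` (for `P ∈ L(U)`, `f ∈ A^{r,2}_λ(U)`) and `C = E·‖f‖` (for `P ∈ 𝔸^{r,2}_λ(U)`). -/
theorem diagonal_operator_truncation_error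
    {H : Type*} [NormedAddCommGroup H] [InnerProductSpace ℝ H] [CompleteSpace H]
    (b : HilbertBasis ℕ ℝ H)
    (l : ℕ → ℝ) (hl : ∀ i, 0 < l i) (hanti : Antitone l)
    (r : ℝ) (hr : 0 < r) (p : ℕ → ℝ) (hp : ∃ M : ℝ, ∀ i, |p i| ≤ M) (f : H) :
    (∀ C : ℝ, 0 ≤ C →
        (Summable fun i => (l i) ^ (-r) * (p i * ⟪b i, f⟫) ^ 2) →
        (∑' i, (l i) ^ (-r) * (p i * ⟪b i, f⟫) ^ 2 ≤ C ^ 2) →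
        ∀ n : ℕ,
          ‖(∑' i, (p i * ⟪b i, f⟫) • b i) -
              ∑ i ∈ Finset.range n, (p i * ⟪b i, f⟫) • b i‖ ≤ (l n) ^ (r / 2) * C) ∧
    (∀ B D : ℝ, 0 ≤ B → 0 ≤ D → (∀ i, |p i| ≤ B) →
        (Summable fun i => (l i) ^ (-r) * ⟪b i, f⟫ ^ 2) →
        (∑' i, (l i) ^ (-r) * ⟪b i, f⟫ ^ 2 ≤ D ^ 2) →
        ∀ n : ℕ,
          ‖(∑' i, (p i * ⟪b i, f⟫) • b i) -
              ∑ i ∈ Finset.range n, (p i * ⟪b i, f⟫) • b i‖ ≤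
            (l n) ^ (r / 2) * (B * D)) ∧
    (∀ E : ℝ, 0 ≤ E →
        (Summable fun i => (l i) ^ (-r) * (p i) ^ 2) →
        (∑' i, (l i) ^ (-r) * (p i) ^ 2 ≤ E ^ 2) →
        ∀ n : ℕ,
          ‖(∑' i, (p i * ⟪b i, f⟫) • b i) -
              ∑ i ∈ Finset.range n, (p i * ⟪b i, f⟫) • b i‖ ≤
            (l n) ^ (r / 2) * (E * ‖f‖)) := by
  have hw : ∀ i, 0 ≤ l i ^ (-r) := fun i => Real.rpow_nonneg (hl i).le _
  refine ⟨fun C hC hs hle n => ?_, fun B D hB hD hpB hs hle n => ?_, fun E hE hs hle n => ?_⟩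
  · exact norm_tsum_sub_sum_range_le b.orthonormal hl hanti hr _ hC hs hle n
  · have hac : ∀ i, (p i * ⟪b i, f⟫) ^ 2 ≤ B ^ 2 * ⟪b i, f⟫ ^ 2 := fun i => by
      rw [mul_pow]
      exact mul_le_mul_of_nonneg_right (sq_le_sq' (abs_le.1 (hpB i)).1 (abs_le.1 (hpB i)).2)
        (sq_nonneg _)
    obtain ⟨hs', hle'⟩ := weighted_summable_and_tsum_le hw hac hs hle
    exact norm_tsum_sub_sum_range_le b.orthonormal hl hanti hr _ (mul_nonneg hB hD) hs' hle' n
  · have hac : ∀ i, (p i * ⟪b i, f⟫) ^ 2 ≤ ‖f‖ ^ 2 * p i ^ 2 := fun i => by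
      -- Cauchy–Schwarz against the unit vector `b i`.
      have h : |⟪b i, f⟫| ≤ ‖f‖ := by
        simpa [b.orthonormal.1 i] using abs_real_inner_le_norm (b i) f
      rw [mul_pow, mul_comm]
      exact mul_le_mul_of_nonneg_right (sq_le_sq' (abs_le.1 h).1 (abs_le.1 h).2) (sq_nonneg _)
    obtain ⟨hs', hle'⟩ := weighted_summable_and_tsum_le hw hac hs hle
    rw [mul_comm E]
    exact norm_tsum_sub_sum_range_le b.orthonormal hl hanti hr _
      (mul_nonneg (norm_nonneg f) hE) hs' hle' n
end

section
/- Let H be a real Hilbert space, (u i)_{i∈ℕ} a Hilbert basis of H, λ : ℕ → ℝ a nonincreasing sequence of strictly positive reals, r > 0, and P : H →L H any continuous linear map. For n ∈ ℕ let Π_n denote the orthogonal projection onto span{u i : i < n}. If f ∈ H satisfies ∑'_{i} (λ i)^(-r) · ⟪u i, f⟫² ≤ C², then ‖(id − Π_n) (P ((id − Π_n) f))‖ ≤ (λ n)^(r/2) · ‖P‖ · C. (Theorem 3.5: error estimate for truncations of compact, not necessarily self-adjoint operators over the spectral approximation spaces.) -/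
/-!
The estimate splits as `‖I - Π_n‖ ≤ 1`, `‖P x‖ ≤ ‖P‖ ‖x‖` and `‖(I - Π_n) f‖ ≤ λ_n^{r/2} C`.
By Parseval, `‖(I - Π_n) f‖²` is the tail `∑_{i ≥ n} ⟪b i, f⟫²` (`hasSum_sq_sub_spectralProj`).
This gives the first bound at once. For the last one, `λ` is nonincreasing and `r > 0`, so
`1 ≤ λ_n^r λ_i^{-r}` for `i ≥ n`, and the tail is at most `λ_n^r ∑_i λ_i^{-r} ⟪b i, f⟫²`.
-/

open scoped RealInnerProductSpace

/-- The orthogonal projection onto the span of the first `n` vectors of an orthonormal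
family: `Π_n f = ∑_{i<n} ⟪u i, f⟫ • u i`. -/
noncomputable def spectralProj {H : Type*} [NormedAddCommGroup H] [InnerProductSpace ℝ H]
    (u : ℕ → H) (n : ℕ) (f : H) : H :=
  ∑ i ∈ Finset.range n, ⟪u i, f⟫ • u i

theorem inner_sub_spectralProj {H : Type*} [NormedAddCommGroup H] [InnerProductSpace ℝ H]
    (b : HilbertBasis ℕ ℝ H) (n : ℕ) (g : H) (i : ℕ) :
    ⟪b i, g - spectralProj (fun i => b i) n g⟫ = if i < n then 0 else ⟪b i, g⟫ := by
  have h := orthonormal_iff_ite.mp b.orthonormal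
  simp only [spectralProj, inner_sub_right, inner_sum, inner_smul_right, h]
  by_cases hi : i < n <;> simp [hi]

/-- Parseval's identity for the projection residual: its squared norm is the tail of the
coefficient series. -/
theorem hasSum_sq_sub_spectralProj {H : Type*} [NormedAddCommGroup H] [InnerProductSpace ℝ H]
    (b : HilbertBasis ℕ ℝ H) (n : ℕ) (g : H) :
    HasSum (fun i => if i < n then 0 else ⟪b i, g⟫ ^ 2)
      (‖g - spectralProj (fun i => b i) n g‖ ^ 2) := by
  have h := b.hasSum_inner_mul_inner (g - spectralProj (fun i => b i) n g)
    (g - spectralProj (fun i => b i) n g)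
  rw [real_inner_self_eq_norm_sq] at h
  refine h.congr_fun fun i => ?_
  rw [real_inner_comm (b i), inner_sub_spectralProj]
  split_ifs <;> ring

theorem norm_sub_spectralProj_le {H : Type*} [NormedAddCommGroup H] [InnerProductSpace ℝ H]
    (b : HilbertBasis ℕ ℝ H) (n : ℕ) (g : H) :
    ‖g - spectralProj (fun i => b i) n g‖ ≤ ‖g‖ := by
  have h0 := hasSum_sq_sub_spectralProj b 0 g
  simp only [not_lt_zero, if_false, spectralProj, Finset.range_zero, Finset.sum_empty,
    sub_zero] at h0
  refine le_of_pow_le_pow_left₀ two_ne_zero (norm_nonneg _) ?_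
  refine hasSum_le (fun i => ?_) (hasSum_sq_sub_spectralProj b n g) h0
  split_ifs
  · positivity
  · exact le_rfl

/-- The Jackson-type estimate: membership in the spectral approximation space of order `r`
controls the projection error by `λ_n^{r/2}`. -/
theorem norm_sub_spectralProj_le_rpow {H : Type*} [NormedAddCommGroup H]
    [InnerProductSpace ℝ H] (b : HilbertBasis ℕ ℝ H)
    (l : ℕ → ℝ) (hl : ∀ i, 0 < l i) (hanti : Antitone l)
    (r : ℝ) (hr : 0 < r) (f : H) (C : ℝ) (hC : 0 ≤ C)
    (hsum : Summable fun i => (l i) ^ (-r) * ⟪b i, f⟫ ^ 2)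
    (hle : ∑' i, (l i) ^ (-r) * ⟪b i, f⟫ ^ 2 ≤ C ^ 2) (n : ℕ) :
    ‖f - spectralProj (fun i => b i) n f‖ ≤ (l n) ^ (r / 2) * C := by
  have hn : 0 < l n ^ r := Real.rpow_pos_of_pos (hl n) r
  have hsq : (l n ^ (r / 2)) ^ 2 = l n ^ r := by
    rw [← Real.rpow_natCast, ← Real.rpow_mul (hl n).le]
    norm_num
  have htail : ‖f - spectralProj (fun i => b i) n f‖ ^ 2 ≤
      l n ^ r * ∑' i, (l i) ^ (-r) * ⟪b i, f⟫ ^ 2 := by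
    refine hasSum_le (fun i => ?_) (hasSum_sq_sub_spectralProj b n f)
      (hsum.hasSum.mul_left (l n ^ r))
    have hi : 0 < l i ^ r := Real.rpow_pos_of_pos (hl i) r
    rw [Real.rpow_neg (hl i).le, ← mul_assoc]
    split_ifs with h
    · positivity
    · have hmono : l i ^ r ≤ l n ^ r :=
        Real.rpow_le_rpow (hl i).le (hanti (not_lt.mp h)) hr.le
      have hone : 1 ≤ l n ^ r * (l i ^ r)⁻¹ := by
        rw [← div_eq_mul_inv]
        exact (one_le_div hi).mpr hmono
      exact le_mul_of_one_le_left (sq_nonneg _) hone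
  refine le_of_pow_le_pow_left₀ two_ne_zero
    (mul_nonneg (Real.rpow_nonneg (hl n).le _) hC) ?_
  rw [mul_pow, hsq]
  exact htail.trans (mul_le_mul_of_nonneg_left hle hn.le)

/-- Theorem 3.5: error estimate `‖(I − Π_n) P (I − Π_n) f‖ ≤ λ_n^{r/2} ‖P‖ |f|_{A^{r,2}_λ}`
for truncations of compact, not necessarily self-adjoint operators over the
spectral approximation spaces. -/
theorem nonselfadjoint_truncation_error
    {H : Type*} [NormedAddCommGroup H] [InnerProductSpace ℝ H] [CompleteSpace H]
    (b : HilbertBasis ℕ ℝ H)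
    (l : ℕ → ℝ) (hl : ∀ i, 0 < l i) (hanti : Antitone l)
    (r : ℝ) (hr : 0 < r) (P : H →L[ℝ] H) (f : H) (C : ℝ) (hC : 0 ≤ C)
    (hsum : Summable fun i => (l i) ^ (-r) * ⟪b i, f⟫ ^ 2)
    (hle : ∑' i, (l i) ^ (-r) * ⟪b i, f⟫ ^ 2 ≤ C ^ 2) :
    ∀ n : ℕ,
      ‖P (f - spectralProj (fun i => b i) n f) -
          spectralProj (fun i => b i) n (P (f - spectralProj (fun i => b i) n f))‖ ≤
        (l n) ^ (r / 2) * ‖P‖ * C := by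
  intro n
  have hf := norm_sub_spectralProj_le_rpow b l hl hanti r hr f C hC hsum hle n
  calc _ ≤ ‖P (f - spectralProj (fun i => b i) n f)‖ := norm_sub_spectralProj_le b n _
    _ ≤ ‖P‖ * ‖f - spectralProj (fun i => b i) n f‖ := P.le_opNorm _
    _ ≤ ‖P‖ * ((l n) ^ (r / 2) * C) := mul_le_mul_of_nonneg_left hf (norm_nonneg _)
    _ = (l n) ^ (r / 2) * ‖P‖ * C := by ring
end

section
/- Let H be a real Hilbert space, ι a countable index type with a level function L : ι → ℕ, (ψ i)_{i∈ι} a Hilbert basis of H, and p : ι → ℝ a bounded sequence. For f ∈ H set P f := ∑'_{i∈ι} p i · ⟪ψ i, f⟫ • ψ i and P_j f := ∑_{i : L i < j} p i · ⟪ψ i, f⟫ • ψ i. (a) If r > 0 and the family i ↦ 2^(2 r · L i) · (p i · ⟪ψ i, f⟫)² is summable with sum at most C², then ‖P f − P_j f‖ ≤ 2^(−r j) · C for every j. (b) If s > r > 0 and i ↦ 2^(2 s · L i) · (p i)² is summable, then ∑'_{i : L i ≥ j} 2^(2 r · L i) · (p i)² ≤ 2^(−2 j (s−r)) · ∑'_{i∈ι}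 2^(2 s · L i) · (p i)². (Theorem on diagonal operators in wavelet bases: ‖(P − P_j) f‖ ≲ 2^{-rj} |P f|_{A^{r,2}(U)} and |P − P_j|_{𝔸^{r,2}(U)} ≲ 2^{-j(s−r)} |P|_{𝔸^{s,2}(U)}.) -/
/-!
Both parts discard the terms of level below `j` and use that, on the remaining indices, the ratio of
the weights of orders `r` and `s` is at most its value at level `j` (`two_rpow_level_le`). For the operator bound this is
`2 ^ (2 * r * L) ≤ 2 ^ (-(2 * j * (s - r))) * 2 ^ (2 * s * L)` whenever `j ≤ L`, summed over `i`.
For the norm bound, Parseval's identity (`norm_sq_tsum_smul_hilbertBasis`) turns the squared norm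
of the truncation error into the sum of the squared coefficients of level at least `j`, to which
the same inequality `1 ≤ 2 ^ (-(2 * r * j)) * 2 ^ (2 * r * L)` for orders `0` and `r` applies.
-/

open scoped RealInnerProductSpace

/-- Riesz-Fischer and Parseval: square-summable coefficients give a convergent expansion in a
Hilbert basis, whose squared norm is the sum of the squares of the coefficients. -/
lemma norm_sq_tsum_smul_hilbertBasis
    {H : Type*} [NormedAddCommGroup H] [InnerProductSpace ℝ H] {ι : Type*}
    (ψ : HilbertBasis ι ℝ H) {c : ι → ℝ} (hc : Summable fun i => c i ^ 2) :
    (Summable fun i => c i • ψ i) ∧ ‖∑' i, c i • ψ i‖ ^ 2 = ∑' i, c i ^ 2 := by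
  have hmem : Memℓp c 2 := by
    refine memℓp_gen ?_
    simpa using hc
  have hs := ψ.hasSum_repr_symm ⟨c, hmem⟩
  refine ⟨hs.summable, ?_⟩
  rw [hs.tsum_eq, LinearIsometryEquiv.norm_map]
  have h := lp.norm_rpow_eq_tsum (p := 2) (by norm_num) (⟨c, hmem⟩ : lp (fun _ : ι => ℝ) 2)
  simpa using h

/-- At levels `l ≥ j`, passing from the weight of order `s` to that of order `r` gains the factor
`2 ^ (-(2 * j * (s - r)))`. -/
lemma two_rpow_level_le {r s : ℝ} (hrs : r ≤ s) {j l : ℕ} (h : j ≤ l) :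
    (2 : ℝ) ^ (2 * r * (l : ℝ)) ≤
      (2 : ℝ) ^ (-(2 * (j : ℝ) * (s - r))) * (2 : ℝ) ^ (2 * s * (l : ℝ)) := by
  rw [← Real.rpow_add two_pos]
  refine Real.rpow_le_rpow_of_exponent_le one_le_two ?_
  have hjl : (j : ℝ) ≤ l := by exact_mod_cast h
  nlinarith [mul_nonneg (sub_nonneg.2 hrs) (sub_nonneg.2 hjl)]

/-- Theorem on diagonal operators in multiscale (wavelet) bases:
`‖(P − P_j) f‖ ≤ 2^{-rj} |P f|_{A^{r,2}(U)}` and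
`|P − P_j|_{𝔸^{r,2}(U)} ≤ 2^{-j(s−r)} |P|_{𝔸^{s,2}(U)}`. -/
theorem wavelet_diagonal_operator_truncation_error
    {H : Type*} [NormedAddCommGroup H] [InnerProductSpace ℝ H] [CompleteSpace H]
    {ι : Type*} [Countable ι] (L : ι → ℕ) (ψ : HilbertBasis ι ℝ H)
    (p : ι → ℝ) (hp : ∃ M : ℝ, ∀ i, |p i| ≤ M) (f : H) :
    (∀ r C : ℝ, 0 < r → 0 ≤ C →
        (Summable fun i : ι => (2 : ℝ) ^ (2 * r * (L i : ℝ)) * (p i * ⟪ψ i, f⟫) ^ 2) →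
        (∑' i : ι, (2 : ℝ) ^ (2 * r * (L i : ℝ)) * (p i * ⟪ψ i, f⟫) ^ 2 ≤ C ^ 2) →
        ∀ j : ℕ,
          ‖(∑' i : ι, (p i * ⟪ψ i, f⟫) • ψ i) -
              ∑' i : {i : ι // L i < j}, (p i.1 * ⟪ψ i.1, f⟫) • ψ i.1‖ ≤
            (2 : ℝ) ^ (-(r * (j : ℝ))) * C) ∧
    (∀ r s : ℝ, 0 < r → r < s →
        (Summable fun i : ι => (2 : ℝ) ^ (2 * s * (L i : ℝ)) * (p i) ^ 2) →
        ∀ j : ℕ,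
          ∑' i : {i : ι // j ≤ L i}, (2 : ℝ) ^ (2 * r * (L i.1 : ℝ)) * (p i.1) ^ 2 ≤
            (2 : ℝ) ^ (-(2 * (j : ℝ) * (s - r))) *
              ∑' i : ι, (2 : ℝ) ^ (2 * s * (L i : ℝ)) * (p i) ^ 2) := by
  constructor
  · intro r C hr hC hsum hle j
    set c : ι → ℝ := fun i => p i * ⟪ψ i, f⟫
    set K : ℝ := (2 : ℝ) ^ (-(2 * (j : ℝ) * (r - 0)))
    have hc2 : Summable fun i => c i ^ 2 := by
      refine hsum.of_nonneg_of_le (fun i => sq_nonneg _) fun i => ?_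
      exact le_mul_of_one_le_left (sq_nonneg _)
        (Real.one_le_rpow one_le_two (by positivity))
    let S : Set ι := {i | L i < j}
    have hlow : Summable fun i => S.indicator c i ^ 2 := by
      refine hc2.of_nonneg_of_le (fun i => sq_nonneg _) fun i => ?_
      by_cases hi : i ∈ S <;> simp [hi, sq_nonneg]
    have hhigh : Summable fun i => Sᶜ.indicator c i ^ 2 := by
      refine hc2.of_nonneg_of_le (fun i => sq_nonneg _) fun i => ?_
      by_cases hi : i ∈ S <;> simp [hi, sq_nonneg]
    have herr : (∑' i, c i • ψ i) - ∑' i : {i : ι // L i < j}, c i.1 • ψ i.1 =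
        ∑' i, Sᶜ.indicator c i • ψ i := by
      have h1 : ∑' i : {i : ι // L i < j}, c i.1 • ψ i.1 = ∑' i, S.indicator c i • ψ i := by
        refine (tsum_subtype S fun i => c i • ψ i).trans (tsum_congr fun i => ?_)
        by_cases hi : i ∈ S <;> simp [hi]
      rw [h1, ← (norm_sq_tsum_smul_hilbertBasis ψ hc2).1.tsum_sub
        (norm_sq_tsum_smul_hilbertBasis ψ hlow).1]
      refine tsum_congr fun i => ?_
      by_cases hi : i ∈ S <;> simp [hi]
    have hbound : ∑' i, Sᶜ.indicator c i ^ 2 ≤ K * C ^ 2 := by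
      calc ∑' i, Sᶜ.indicator c i ^ 2
          ≤ ∑' i, K * ((2 : ℝ) ^ (2 * r * (L i : ℝ)) * c i ^ 2) := by
            refine hhigh.tsum_le_tsum (fun i => ?_) (hsum.mul_left K)
            by_cases hi : i ∈ S
            · simp only [Set.indicator_of_notMem (Set.notMem_compl_iff.2 hi)]
              rw [zero_pow two_ne_zero]
              positivity
            -- The weight of order `0` is `1`.
            · have hw := two_rpow_level_le hr.le (not_lt.1 hi : j ≤ L i)
              rw [mul_zero, zero_mul, Real.rpow_zero] at hw
              rw [Set.indicator_of_mem (Set.mem_compl hi), ← mul_assoc]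
              exact le_mul_of_one_le_left (sq_nonneg _) hw
        _ = K * ∑' i, (2 : ℝ) ^ (2 * r * (L i : ℝ)) * c i ^ 2 := tsum_mul_left
        _ ≤ K * C ^ 2 := mul_le_mul_of_nonneg_left hle (by positivity)
    have hK : K = ((2 : ℝ) ^ (-(r * (j : ℝ)))) ^ 2 := by
      simp only [K]
      rw [← Real.rpow_mul_natCast two_pos.le]
      congr 1
      push_cast
      ring
    change ‖(∑' i, c i • ψ i) - ∑' i : {i : ι // L i < j}, c i.1 • ψ i.1‖ ≤ _
    refine le_of_sq_le_sq ?_ (by positivity)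
    rw [herr, (norm_sq_tsum_smul_hilbertBasis ψ hhigh).2, mul_pow, ← hK]
    exact hbound
  · intro r s hr hrs hsum j
    have hsub : Summable fun i : {i : ι // j ≤ L i} =>
        (2 : ℝ) ^ (-(2 * (j : ℝ) * (s - r))) * ((2 : ℝ) ^ (2 * s * (L i.1 : ℝ)) * p i.1 ^ 2) :=
      (hsum.subtype {i | j ≤ L i}).mul_left _
    have hterm : ∀ i : {i : ι // j ≤ L i}, (2 : ℝ) ^ (2 * r * (L i.1 : ℝ)) * p i.1 ^ 2 ≤
        (2 : ℝ) ^ (-(2 * (j : ℝ) * (s - r))) *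
          ((2 : ℝ) ^ (2 * s * (L i.1 : ℝ)) * p i.1 ^ 2) := fun i => by
      rw [← mul_assoc]
      exact mul_le_mul_of_nonneg_right (two_rpow_level_le hrs.le i.2) (sq_nonneg _)
    refine ((hsub.of_nonneg_of_le (fun i => by positivity) hterm).tsum_le_tsum hterm
      hsub).trans ?_
    rw [tsum_mul_left]
    refine mul_le_mul_of_nonneg_left ?_ (by positivity)
    exact hsum.tsum_subtype_le _ {i | j ≤ L i} fun i => by positivity
end

section
/- Let λ : ℕ → ℝ (indexed from 1) be a nonincreasing sequence of strictly positive reals, and suppose there are constants c₁, c₂ > 0 with c₁ · 4^(−j) ≤ λ(2^j) ≤ c₂ · 4^(−j) for all j ∈ ℕ. Then for every r > 0 and every real sequence a : ℕ → ℝ, c₂^(−r) · ∑'_{j∈ℕ} 4^(r j) · (∑_{k < 2^j} a(2^j + k)²) ≤ ∑'_{m ≥ 1} (λ m)^(−r) · (a m)² ≤ 4^r · c₁^(−r) · ∑'_{j∈ℕ} 4^(r j) · (∑_{k < 2^j} a(2^j + k)²), where a sum is interpreted as +∞ exactly when the corresponding family is not summable. (Theorem on equivalence of A^{r,2}_λ(U)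 and A^{r,2}(U): when the eigenvalues satisfy λ_{2^j} ≈ 2^{-2j}, the spectral approximation space coincides with the dyadic linear approximation space, with equivalent norms.) -/
/-!
For `2 ^ j ≤ m < 2 ^ (j + 1)`, monotonicity squeezes `l m` between the two neighbouring dyadic
values: `c₁ * 4 ^ (-(j + 1)) ≤ l (2 ^ (j + 1)) ≤ l m ≤ l (2 ^ j) ≤ c₂ * 4 ^ (-j)`.
Raising to the power `-r < 0` reverses the inequalities, so the weight `l m ^ (-r)` lies between
`c₂ ^ (-r) * 4 ^ (r * j)` and `4 ^ r * c₁ ^ (-r) * 4 ^ (r * j)` (`dyadic_weight_lower`,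
`dyadic_weight_upper`). It remains to split the sum over `m ≥ 1` into dyadic blocks
(`tsum_eq_tsum_dyadic`) and to compare block by block.
-/

/-- Every `m ≥ 1` is uniquely `2 ^ j + k` with `k < 2 ^ j`, so a sum over `m ≥ 1` splits into
dyadic blocks. -/
theorem tsum_eq_tsum_dyadic (g : ℕ → ENNReal) :
    ∑' m : {m : ℕ // 1 ≤ m}, g m.1 = ∑' j : ℕ, ∑ k ∈ Finset.range (2 ^ j), g (2 ^ j + k) := by
  let φ : (Σ j : ℕ, Fin (2 ^ j)) → {m : ℕ // 1 ≤ m} :=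
    fun p => ⟨2 ^ p.1 + p.2, le_add_right Nat.one_le_two_pow⟩
  -- The level `j` is recovered from `m` as `Nat.log 2 m`.
  have hlog : ∀ (j : ℕ) (k : Fin (2 ^ j)), Nat.log 2 (2 ^ j + k) = j := fun j k =>
    Nat.log_eq_of_pow_le_of_lt_pow (Nat.le_add_right _ _) (by rw [pow_succ]; omega)
  have hφ : Function.Bijective φ := by
    constructor
    · rintro ⟨i, x⟩ ⟨j, y⟩ h
      have h' : 2 ^ i + (x : ℕ) = 2 ^ j + (y : ℕ) := congrArg Subtype.val h
      have hij : i = j := by rw [← hlog i x, h', hlog j y]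
      subst hij
      have hxy : x = y := Fin.ext (by omega)
      rw [hxy]
    · rintro ⟨m, hm⟩
      have h1 : 2 ^ Nat.log 2 m ≤ m := Nat.pow_log_le_self 2 (by omega)
      have h2 : m < 2 ^ (Nat.log 2 m + 1) := Nat.lt_pow_succ_log_self one_lt_two m
      rw [pow_succ] at h2
      exact ⟨⟨Nat.log 2 m, ⟨m - 2 ^ Nat.log 2 m, by omega⟩⟩, Subtype.ext (by simp only [φ]; omega)⟩
  rw [← (Equiv.ofBijective φ hφ).tsum_eq, ENNReal.tsum_sigma']
  refine tsum_congr fun j => ?_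
  rw [tsum_fintype, Finset.sum_range]
  rfl

theorem dyadic_weight_lower {c x r : ℝ} (j : ℕ) (hc : 0 < c) (hx : 0 < x) (hr : 0 < r)
    (h : x ≤ c * (4 : ℝ) ^ (-(j : ℝ))) :
    c ^ (-r) * (4 : ℝ) ^ (r * (j : ℝ)) ≤ x ^ (-r) := by
  have h1 := Real.rpow_le_rpow_of_nonpos hx h (by linarith : -r ≤ 0)
  rwa [Real.mul_rpow hc.le (by positivity), ← Real.rpow_mul (by norm_num),
    neg_mul_neg, mul_comm (j : ℝ) r] at h1

theorem dyadic_weight_upper {c x r : ℝ} (j : ℕ) (hc : 0 < c) (hr : 0 < r)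
    (h : c * (4 : ℝ) ^ (-((j + 1 : ℕ) : ℝ)) ≤ x) :
    x ^ (-r) ≤ (4 : ℝ) ^ r * c ^ (-r) * (4 : ℝ) ^ (r * (j : ℝ)) := by
  have h1 := Real.rpow_le_rpow_of_nonpos (by positivity) h (by linarith : -r ≤ 0)
  rw [Real.mul_rpow hc.le (by positivity), ← Real.rpow_mul (by norm_num), neg_mul_neg] at h1
  refine h1.trans_eq ?_
  have h2 : ((j + 1 : ℕ) : ℝ) * r = r + r * j := by push_cast; ring
  rw [h2, Real.rpow_add (by norm_num)]
  ring


/-- Equivalence of `A^{r,2}_λ(U)` and `A^{r,2}(U)`: when the eigenvalues satisfy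
`λ_{2^j} ≈ 2^{-2j} = 4^{-j}`, the spectral approximation seminorm is equivalent to the
dyadic-block linear approximation seminorm (sums in `ℝ≥0∞`, so a sum is `+∞` exactly
when the corresponding family is not summable). -/
theorem spectral_eq_dyadic_approx_space
    (l : ℕ → ℝ) (hl : ∀ i, 0 < l i) (hanti : Antitone l)
    (c₁ c₂ : ℝ) (hc₁ : 0 < c₁) (hc₂ : 0 < c₂)
    (hlow : ∀ j : ℕ, c₁ * (4 : ℝ) ^ (-(j : ℝ)) ≤ l (2 ^ j))
    (hhigh : ∀ j : ℕ, l (2 ^ j) ≤ c₂ * (4 : ℝ) ^ (-(j : ℝ))) :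
    ∀ (r : ℝ), 0 < r → ∀ (a : ℕ → ℝ),
      ENNReal.ofReal (c₂ ^ (-r)) *
          (∑' j : ℕ, ENNReal.ofReal
            ((4 : ℝ) ^ (r * (j : ℝ)) * ∑ k ∈ Finset.range (2 ^ j), a (2 ^ j + k) ^ 2)) ≤
        (∑' m : {m : ℕ // 1 ≤ m}, ENNReal.ofReal ((l m.1) ^ (-r) * a m.1 ^ 2)) ∧
      (∑' m : {m : ℕ // 1 ≤ m}, ENNReal.ofReal ((l m.1) ^ (-r) * a m.1 ^ 2)) ≤
        ENNReal.ofReal ((4 : ℝ) ^ r * c₁ ^ (-r)) *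
          (∑' j : ℕ, ENNReal.ofReal
            ((4 : ℝ) ^ (r * (j : ℝ)) * ∑ k ∈ Finset.range (2 ^ j), a (2 ^ j + k) ^ 2)) := by
  intro r hr a
  rw [tsum_eq_tsum_dyadic fun m => ENNReal.ofReal ((l m) ^ (-r) * a m ^ 2),
    ← ENNReal.tsum_mul_left, ← ENNReal.tsum_mul_left]
  have hsum : ∀ j : ℕ, ∑ k ∈ Finset.range (2 ^ j),
      ENNReal.ofReal ((l (2 ^ j + k)) ^ (-r) * a (2 ^ j + k) ^ 2) =
      ENNReal.ofReal (∑ k ∈ Finset.range (2 ^ j), (l (2 ^ j + k)) ^ (-r) * a (2 ^ j + k) ^ 2) :=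
    fun j => (ENNReal.ofReal_sum_of_nonneg fun k _ =>
      mul_nonneg (Real.rpow_nonneg (hl _).le _) (sq_nonneg _)).symm
  constructor
  · refine ENNReal.tsum_le_tsum fun j => ?_
    rw [hsum, ← ENNReal.ofReal_mul (by positivity), ← mul_assoc, Finset.mul_sum]
    refine ENNReal.ofReal_le_ofReal (Finset.sum_le_sum fun k _ => ?_)
    exact mul_le_mul_of_nonneg_right (dyadic_weight_lower j hc₂ (hl _) hr
      ((hanti (Nat.le_add_right _ _)).trans (hhigh j))) (sq_nonneg _)
  · refine ENNReal.tsum_le_tsum fun j => ?_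
    rw [hsum, ← ENNReal.ofReal_mul (by positivity), ← mul_assoc, Finset.mul_sum]
    refine ENNReal.ofReal_le_ofReal (Finset.sum_le_sum fun k hk => ?_)
    have hk' : 2 ^ j + k ≤ 2 ^ (j + 1) := by
      have := Finset.mem_range.1 hk
      rw [pow_succ]; omega
    exact mul_le_mul_of_nonneg_right (dyadic_weight_upper j hc₁ hr
      ((hlow (j + 1)).trans (hanti hk'))) (sq_nonneg _)
end

section
/- Let U be a real Hilbert space, r > 0, and g : ℕ → U a sequence with pairwise orthogonal values that is summable with sum f = ∑'_{i} g i and satisfies ∑'_{i} 2^(2 r i) · ‖g i‖² ≤ C². Then for every u ∈ U and every j ∈ ℕ, |⟪u, f − ∑_{i<j} g i⟫| ≤ 2^(−r j) · ‖u‖ · C. (Theorem on weak* approximation of measures: in a Gelfand triple X ↪ U ≈ U* ↪ X* in which the duality pairing ⟨u*, f⟩_{X*×X} of u* = R_U u with f ∈ X is represented by the inner product (u, f)_U, this is the statement |⟨(I − Π_j′) u*, f⟩_{X*×X}| ≤ 2^{-rj} ‖u‖_U ‖f‖_{A^{r,2}(U)}, i.e. the dual projections Π_j′ u* converge to u* in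 the weak*(X*, A^{r,2}(U)) topology at rate 2^{-rj}.) -/
/-!
By Cauchy-Schwarz it suffices to bound the norm of the tail `f - ∑_{i<j} g i` by `2^{-rj} C`.
The tail is the limit of the finite sums `∑_{j≤i<n} g i`. By Pythagoras the squared norm of such a
sum is `∑_{j≤i<n} ‖g i‖²`, and since `1 ≤ 2^{-2rj} 2^{2ri}` for `i ≥ j` this is at most
`2^{-2rj} ∑_i 2^{2ri} ‖g i‖² ≤ (2^{-rj} C)²`.
-/

open scoped RealInnerProductSpace

/-- Pythagoras for a finite sum of pairwise orthogonal vectors. -/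
theorem norm_sq_sum_of_pairwise_orthogonal
    {U : Type*} [NormedAddCommGroup U] [InnerProductSpace ℝ U] (g : ℕ → U)
    (horth : ∀ i k : ℕ, i ≠ k → ⟪g i, g k⟫ = 0) (s : Finset ℕ) :
    ‖∑ i ∈ s, g i‖ ^ 2 = ∑ i ∈ s, ‖g i‖ ^ 2 := by
  rw [← real_inner_self_eq_norm_sq, sum_inner]
  refine Finset.sum_congr rfl fun i hi => ?_
  rw [inner_sum, Finset.sum_eq_single_of_mem i hi fun k _ hk => horth i k hk.symm,
    real_inner_self_eq_norm_sq]

/-- Weak* approximation of measures in a Gelfand triple `X ↪ U ≈ U* ↪ X*`: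
`|⟨(I − Π_j′) u*, f⟩| = |(u, (I − Π_j) f)_U| ≤ 2^{-rj} ‖u‖_U ‖f‖_{A^{r,2}(U)}`,
so the dual projections converge in the weak*(X*, A^{r,2}(U)) topology at rate `2^{-rj}`. -/
theorem gelfand_dual_projection_error
    {U : Type*} [NormedAddCommGroup U] [InnerProductSpace ℝ U] [CompleteSpace U]
    (r : ℝ) (hr : 0 < r) (g : ℕ → U)
    (horth : ∀ i k : ℕ, i ≠ k → ⟪g i, g k⟫ = 0)
    (hg : Summable g) (C : ℝ) (hC : 0 ≤ C)
    (hsum : Summable fun i : ℕ => (2 : ℝ) ^ (2 * r * (i : ℝ)) * ‖g i‖ ^ 2)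
    (hle : ∑' i : ℕ, (2 : ℝ) ^ (2 * r * (i : ℝ)) * ‖g i‖ ^ 2 ≤ C ^ 2) :
    ∀ (u : U) (j : ℕ),
      |⟪u, (∑' i, g i) - ∑ i ∈ Finset.range j, g i⟫| ≤
        (2 : ℝ) ^ (-(r * (j : ℝ))) * ‖u‖ * C := by
  intro u j
  have hfin : ∀ n : ℕ, j ≤ n →
      ‖∑ i ∈ Finset.range n, g i - ∑ i ∈ Finset.range j, g i‖ ≤
        (2 : ℝ) ^ (-(r * (j : ℝ))) * C := by
    intro n hn
    refine (sq_le_sq₀ (norm_nonneg _) (by positivity)).mp ?_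
    rw [← Finset.sum_Ico_eq_sub _ hn, norm_sq_sum_of_pairwise_orthogonal g horth]
    calc ∑ i ∈ Finset.Ico j n, ‖g i‖ ^ 2
        ≤ ∑ i ∈ Finset.Ico j n, ((2 : ℝ) ^ (-(r * (j : ℝ)))) ^ 2 *
            ((2 : ℝ) ^ (2 * r * (i : ℝ)) * ‖g i‖ ^ 2) := by
          refine Finset.sum_le_sum fun i hi => ?_
          have hji : (j : ℝ) ≤ i := by exact_mod_cast (Finset.mem_Ico.mp hi).1
          have h1 : 1 ≤ ((2 : ℝ) ^ (-(r * (j : ℝ)))) ^ 2 * (2 : ℝ) ^ (2 * r * (i : ℝ)) := by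
            rw [sq, ← Real.rpow_add two_pos, ← Real.rpow_add two_pos]
            exact Real.one_le_rpow one_le_two (by nlinarith)
          rw [← mul_assoc]
          exact le_mul_of_one_le_left (sq_nonneg _) h1
      _ = ((2 : ℝ) ^ (-(r * (j : ℝ)))) ^ 2 *
            ∑ i ∈ Finset.Ico j n, (2 : ℝ) ^ (2 * r * (i : ℝ)) * ‖g i‖ ^ 2 := by
          rw [Finset.mul_sum]
      _ ≤ ((2 : ℝ) ^ (-(r * (j : ℝ)))) ^ 2 * C ^ 2 := by
          gcongr
          exact (hsum.sum_le_tsum _ fun i _ => by positivity).trans hle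
      _ = ((2 : ℝ) ^ (-(r * (j : ℝ))) * C) ^ 2 := by ring
  have htail : ‖(∑' i, g i) - ∑ i ∈ Finset.range j, g i‖ ≤ (2 : ℝ) ^ (-(r * (j : ℝ))) * C :=
    le_of_tendsto (hg.hasSum.tendsto_sum_nat.sub_const _).norm
      (Filter.eventually_atTop.mpr ⟨j, hfin⟩)
  calc |⟪u, (∑' i, g i) - ∑ i ∈ Finset.range j, g i⟫|
      ≤ ‖u‖ * ‖(∑' i, g i) - ∑ i ∈ Finset.range j, g i‖ := abs_real_inner_le_norm _ _
    _ ≤ ‖u‖ * ((2 : ℝ) ^ (-(r * (j : ℝ))) * C) := by gcongr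
    _ = (2 : ℝ) ^ (-(r * (j : ℝ))) * ‖u‖ * C := by ring
end

section
/- Let X be a real normed space, (A_n)_{n∈ℕ} a nested increasing family of linear subspaces of X with A_0 = {0}, and let r > 0 and 1 ≤ q < ∞. Let (n_j)_{j∈ℕ} be a quasigeometric sequence of positive integers (there exist 1 < c₁ ≤ c₂ with c₁ ≤ n_{j+1}/n_j ≤ c₂ for all j). For each j let Π_j : X →L X be a continuous linear projection onto A_{n_j} (its range is contained in A_{n_j} and Π_j a = a for all a ∈ A_{n_j}) with operator norm ‖Π_j‖ ≤ B. Then there is a constant K, depending only on r, q and B, such that for every f ∈ X with ∑_{n ≥ 1} n^(r q − 1) · dist(f, A_{n−1})^q ≤ C^q, one has for all j: (i) ‖f − Π_j f‖ ≤ K · n_j^(−r) · C, and (ii) for every continuous linear functional ν : X →L ℝ, |ν (f − Π_j f)| ≤ K · n_j^(−r) · ‖ν‖ · C. (Theorem on dual convergence of measures: near-best projections converge at rate n_j^{-r} on the approximation space A^{r,q}(X), and their dual operators converge in the weak*(X*, A^{r,q}(X)) sense at the same rate.) -/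
/-! The proof combines a Lebesgue-type inequality with the monotonicity of best approximation errors.
A projection of norm at most `B` onto a subspace `V` satisfies
`‖f - T f‖ ≤ (1 + B) * dist(f, V)` (`norm_sub_apply_le_infDist`). Since the distances to the
nested subspaces decrease, the first `N` terms of the series defining the `A^{r,q}` norm are at
least `dist(f, A N) ^ q * ∑_{k ≤ N} k ^ (r q - 1)`, and that sum of powers is at least
`N ^ (r q) / max 1 (r q)` (`rpow_le_sum_rpow`). Hence `dist(f, A N) ≤ max 1 (r q) * N ^ (-r) * C`
(`infDist_le_of_tsum_le`), and `K = (1 + B) * max 1 (r q)` works. -/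

universe u

/-- Lower bound for power sums, obtained by telescoping `k ^ s - (k - 1) ^ s`, which Bernoulli's
inequality bounds by `max 1 s * k ^ (s - 1)`. -/
lemma rpow_le_sum_rpow {s : ℝ} (hs : 0 < s) (N : ℕ) :
    (N : ℝ) ^ s ≤ max 1 s * ∑ m ∈ Finset.range N, ((m : ℝ) + 1) ^ (s - 1) := by
  induction N with
  | zero => simp [Real.zero_rpow hs.ne']
  | succ N ih =>
    rw [Finset.sum_range_succ, mul_add]
    have hk : (0 : ℝ) < (N : ℝ) + 1 := by positivity
    have hx0 : (0 : ℝ) ≤ (N : ℝ) / ((N : ℝ) + 1) := by positivity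
    have hx1 : (N : ℝ) / ((N : ℝ) + 1) ≤ 1 := by rw [div_le_one hk]; linarith
    have hx : 1 + -(1 / ((N : ℝ) + 1)) = (N : ℝ) / ((N : ℝ) + 1) := by field_simp; ring
    have h1 : 1 + max 1 s * -(1 / ((N : ℝ) + 1)) ≤ ((N : ℝ) / ((N : ℝ) + 1)) ^ max 1 s := by
      have := one_add_mul_self_le_rpow_one_add (s := -(1 / ((N : ℝ) + 1))) (p := max 1 s)
        (by linarith) (le_max_left _ _)
      rwa [hx] at this
    have h2 : ((N : ℝ) / ((N : ℝ) + 1)) ^ max 1 s ≤ ((N : ℝ) / ((N : ℝ) + 1)) ^ s :=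
      Real.rpow_le_rpow_of_exponent_ge_of_imp hx0 hx1 (le_max_right _ _)
        (fun _ h => absurd h (by positivity))
    have h3 := mul_le_mul_of_nonneg_left (h1.trans h2) (Real.rpow_nonneg hk.le s)
    rw [← Real.mul_rpow hk.le hx0, mul_div_cancel₀ _ hk.ne'] at h3
    have h4 : ((N : ℝ) + 1) ^ s * (1 + max 1 s * -(1 / ((N : ℝ) + 1)))
        = ((N : ℝ) + 1) ^ s - max 1 s * ((N : ℝ) + 1) ^ (s - 1) := by
      rw [Real.rpow_sub_one hk.ne']; ring
    push_cast
    linarith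

/-- The direct estimate for the approximation space: decay of the distances at rate `N ^ (-r)`. -/
lemma infDist_le_of_tsum_le {X : Type*} [NormedAddCommGroup X] [NormedSpace ℝ X]
    {r q C : ℝ} (hr : 0 < r) (hq : 1 ≤ q) (hC : 0 ≤ C) {A : ℕ → Submodule ℝ X}
    (hA : Monotone A) (f : X)
    (hsum : Summable fun m : ℕ =>
      ((m : ℝ) + 1) ^ (r * q - 1) * Metric.infDist f (A m : Set X) ^ q)
    (hle : ∑' m : ℕ,
      ((m : ℝ) + 1) ^ (r * q - 1) * Metric.infDist f (A m : Set X) ^ q ≤ C ^ q)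
    {N : ℕ} (hN : 0 < N) :
    Metric.infDist f (A N : Set X) ≤ max 1 (r * q) * (N : ℝ) ^ (-r) * C := by
  have hq0 : 0 < q := by linarith
  have hN0 : (0 : ℝ) < N := by exact_mod_cast hN
  set M := max 1 (r * q)
  have hM : 1 ≤ M := le_max_left _ _
  have hd : 0 ≤ Metric.infDist f (A N : Set X) := Metric.infDist_nonneg
  set d := Metric.infDist f (A N : Set X)
  have h1 : (∑ m ∈ Finset.range N, ((m : ℝ) + 1) ^ (r * q - 1)) * d ^ q ≤ C ^ q := by
    rw [Finset.sum_mul]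
    refine le_trans (Finset.sum_le_sum fun m hm => ?_)
      ((hsum.sum_le_tsum (Finset.range N) fun m _ => ?_).trans hle)
    · have hmN : (A m : Set X) ⊆ A N := hA (Finset.mem_range.1 hm).le
      have := Metric.infDist_le_infDist_of_subset (x := f) hmN ⟨0, (A m).zero_mem⟩
      gcongr
    · have : 0 ≤ Metric.infDist f (A m : Set X) := Metric.infDist_nonneg
      positivity
  have h2 : ((N : ℝ) ^ r * d) ^ q ≤ (M * C) ^ q := by
    rw [Real.mul_rpow (by positivity) hd, Real.mul_rpow (by positivity) hC,
      ← Real.rpow_mul hN0.le]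
    calc (N : ℝ) ^ (r * q) * d ^ q
        ≤ (M * ∑ m ∈ Finset.range N, ((m : ℝ) + 1) ^ (r * q - 1)) * d ^ q := by
          gcongr
          exact rpow_le_sum_rpow (by positivity) N
      _ ≤ M * C ^ q := by
          rw [mul_assoc]
          gcongr
      _ ≤ M ^ q * C ^ q := by
          gcongr
          exact Real.self_le_rpow_of_one_le hM hq
  have h3 : (N : ℝ) ^ r * d ≤ M * C :=
    (Real.rpow_le_rpow_iff (by positivity) (by positivity) hq0).1 h2
  rw [Real.rpow_neg hN0.le, mul_right_comm, ← div_eq_mul_inv, le_div_iff₀ (by positivity)]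
  linarith

/-- Lebesgue's inequality: a bounded projection onto `V` is near-best among approximants in `V`,
because `f - T f = (f - a) - T (f - a)` for every `a ∈ V`. -/
lemma norm_sub_apply_le_infDist {X : Type*} [NormedAddCommGroup X] [NormedSpace ℝ X]
    {B : ℝ} (hB : 0 ≤ B) (V : Submodule ℝ X) (T : X →L[ℝ] X)
    (hT : ∀ a ∈ V, T a = a) (hTB : ‖T‖ ≤ B) (f : X) :
    ‖f - T f‖ ≤ (1 + B) * Metric.infDist f (V : Set X) := by
  rw [← div_le_iff₀' (by positivity), Metric.le_infDist ⟨0, V.zero_mem⟩]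
  intro a ha
  rw [div_le_iff₀' (by positivity), dist_eq_norm]
  calc ‖f - T f‖ = ‖(f - a) - T (f - a)‖ := by
        rw [map_sub, hT a ha]
        congr 1
        abel
    _ ≤ ‖f - a‖ + ‖T (f - a)‖ := norm_sub_le _ _
    _ ≤ ‖f - a‖ + B * ‖f - a‖ := by
        gcongr
        exact T.le_of_opNorm_le hTB _
    _ = (1 + B) * ‖f - a‖ := by ring

/-- Dual convergence of measures: near-best uniformly bounded projections onto a
quasigeometric scale of approximant subspaces converge at rate `n_j^{-r}` on the
approximation space `A^{r,q}(X)`, and their dual operators converge in the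
weak*(X*, A^{r,q}(X)) sense at the same rate; the constant `K` depends only on
`r`, `q` and the projection bound `B`. -/
theorem dual_convergence_near_best_projections
    (r q B : ℝ) (hr : 0 < r) (hq : 1 ≤ q) (hB : 0 ≤ B) :
    ∃ K : ℝ, ∀ (X : Type u) [NormedAddCommGroup X] [NormedSpace ℝ X]
      (A : ℕ → Submodule ℝ X), Monotone A → A 0 = ⊥ →
      ∀ (n : ℕ → ℕ) (c₁ c₂ : ℝ), 1 < c₁ →
        (∀ j : ℕ, 0 < n j) →
        (∀ j : ℕ, c₁ * (n j : ℝ) ≤ (n (j + 1) : ℝ)) →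
        (∀ j : ℕ, (n (j + 1) : ℝ) ≤ c₂ * (n j : ℝ)) →
      ∀ T : ℕ → X →L[ℝ] X,
        (∀ (j : ℕ) (x : X), T j x ∈ A (n j)) →
        (∀ (j : ℕ), ∀ a ∈ A (n j), T j a = a) →
        (∀ j : ℕ, ‖T j‖ ≤ B) →
      ∀ (f : X) (C : ℝ), 0 ≤ C →
        (Summable fun m : ℕ =>
          ((m : ℝ) + 1) ^ (r * q - 1) * Metric.infDist f (A m : Set X) ^ q) →
        (∑' m : ℕ,
          ((m : ℝ) + 1) ^ (r * q - 1) * Metric.infDist f (A m : Set X) ^ q ≤ C ^ q) →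
      ∀ j : ℕ,
        ‖f - T j f‖ ≤ K * (n j : ℝ) ^ (-r) * C ∧
        ∀ ν : X →L[ℝ] ℝ, |ν (f - T j f)| ≤ K * (n j : ℝ) ^ (-r) * ‖ν‖ * C := by
  refine ⟨(1 + B) * max 1 (r * q), ?_⟩
  intro X _ _ A hA _ n c₁ c₂ _ hn _ _ T _ hT hTB f C hC hsum hle j
  have h : ‖f - T j f‖ ≤ (1 + B) * max 1 (r * q) * (n j : ℝ) ^ (-r) * C :=
    calc ‖f - T j f‖ ≤ (1 + B) * Metric.infDist f (A (n j) : Set X) :=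
          norm_sub_apply_le_infDist hB _ _ (hT j) (hTB j) f
      _ ≤ (1 + B) * (max 1 (r * q) * (n j : ℝ) ^ (-r) * C) := by
          gcongr
          exact infDist_le_of_tsum_le hr hq hC hA f hsum hle (hn j)
      _ = (1 + B) * max 1 (r * q) * (n j : ℝ) ^ (-r) * C := by ring
  refine ⟨h, fun ν => ?_⟩
  calc |ν (f - T j f)| ≤ ‖ν‖ * ‖f - T j f‖ := ν.le_opNorm _
    _ ≤ ‖ν‖ * ((1 + B) * max 1 (r * q) * (n j : ℝ) ^ (-r) * C) := by gcongr
    _ = (1 + B) * max 1 (r * q) * (n j : ℝ) ^ (-r) * ‖ν‖ * C := by ring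
end

section
/- Let H be a real Hilbert space, r > 0, and suppose every f ∈ H decomposes into pairwise orthogonal summable blocks f = ∑'_{i} Q_i f with Q_i the orthogonal block projections and Π_j f := ∑_{i<j} Q_i f, and write N(f)² := ∑'_{i} 2^(2 r i) · ‖Q_i f‖² (possibly infinite). Let U : H →L H be a continuous linear map with ‖U g‖ ≤ C₀ · ‖g‖ for all g and N(U g) ≤ C_r · N(g) for all g with N(g) < ∞. Then for every f with N(f) ≤ C < ∞ and every j ∈ ℕ, ‖U f − Π_j (U (Π_j f))‖ ≤ 2^(−r j) · (C_r + C₀) · C. (The paper's estimate ‖(U − U_j) f‖_{L²} ≲ 2^{-rj} (‖U‖_r + ‖U‖_0) ‖f‖_{A^{r,2}} for the compressed operator U_j := Π_j U Π_j when U is bounded on both U and A^{r,2}(U).) -/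
/-!
Write `Π_j g = ∑ i ∈ Finset.range j, Q i g`. The error splits as `U f - Π_j U Π_j f = (U f - Π_j U f) + Π_j U (f - Π_j f)`. The first term
is a tail of the block series of `U f`, the second is controlled by the contractivity of `Π_j`,
the bound `‖U g‖ ≤ C₀ ‖g‖`, and a tail of the block series of `f`. Only two facts about blocks
are needed, both for the block series of one vector: a partial sum of an orthogonal series is no
longer than the full sum (`norm_block_sum_le`), and the tail from index `j` on is at most
`2^{-rj}` times the weighted `ℓ²` norm of the blocks (`norm_block_tail_le`).
-/

open scoped RealInnerProductSpace

/-- Pythagoras for a finite sum of pairwise orthogonal vectors. -/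
lemma norm_sq_sum_of_orthogonal {H : Type*} [NormedAddCommGroup H] [InnerProductSpace ℝ H]
    (v : ℕ → H) (hv : ∀ i k : ℕ, i ≠ k → ⟪v i, v k⟫ = 0) (s : Finset ℕ) :
    ‖∑ i ∈ s, v i‖ ^ 2 = ∑ i ∈ s, ‖v i‖ ^ 2 := by
  classical
  induction s using Finset.induction_on with
  | empty => simp
  | insert a s ha ih =>
    have h0 : ⟪v a, ∑ i ∈ s, v i⟫ = 0 := by
      rw [inner_sum]
      exact Finset.sum_eq_zero fun i hi => hv a i (by rintro rfl; exact ha hi)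
    rw [Finset.sum_insert ha, Finset.sum_insert ha, norm_add_sq_real, h0, ih]
    ring

lemma norm_block_sum_le {H : Type*} [NormedAddCommGroup H] [InnerProductSpace ℝ H]
    (v : ℕ → H) (hv : ∀ i k : ℕ, i ≠ k → ⟪v i, v k⟫ = 0) (g : H) (hg : HasSum v g) (j : ℕ) :
    ‖∑ i ∈ Finset.range j, v i‖ ≤ ‖g‖ := by
  refine ge_of_tendsto hg.tendsto_sum_nat.norm ?_
  filter_upwards [Filter.eventually_ge_atTop j] with n hn
  refine le_of_sq_le_sq ?_ (norm_nonneg _)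
  rw [norm_sq_sum_of_orthogonal v hv, norm_sq_sum_of_orthogonal v hv]
  exact Finset.sum_le_sum_of_subset_of_nonneg (Finset.range_mono hn)
    fun i _ _ => sq_nonneg _

/-- The Jackson-type estimate `‖g - Π_j g‖ ≤ 2^{-rj} N(g)`, for an orthogonal series `v` with
sum `g` and an upper bound `B` for its weighted `ℓ²` norm. -/
lemma norm_block_tail_le {H : Type*} [NormedAddCommGroup H] [InnerProductSpace ℝ H]
    (r : ℝ) (hr : 0 < r) (v : ℕ → H) (hv : ∀ i k : ℕ, i ≠ k → ⟪v i, v k⟫ = 0)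
    (g : H) (hg : HasSum v g) (B : ℝ) (hB : 0 ≤ B)
    (hN : (∑' i : ℕ, ENNReal.ofReal ((2 : ℝ) ^ (2 * r * (i : ℝ)) * ‖v i‖ ^ 2)) ^ (1 / 2 : ℝ)
      ≤ ENNReal.ofReal B) (j : ℕ) :
    ‖g - ∑ i ∈ Finset.range j, v i‖ ≤ (2 : ℝ) ^ (-(r * (j : ℝ))) * B := by
  have hfin : ∀ s : Finset ℕ, ∑ i ∈ s, (2 : ℝ) ^ (2 * r * (i : ℝ)) * ‖v i‖ ^ 2 ≤ B ^ 2 := by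
    intro s
    have h1 : (∑' i : ℕ, ENNReal.ofReal ((2 : ℝ) ^ (2 * r * (i : ℝ)) * ‖v i‖ ^ 2))
        ≤ ENNReal.ofReal (B ^ 2) := by
      have h2 := ENNReal.rpow_le_rpow hN (z := 2) (by norm_num)
      rw [← ENNReal.rpow_mul] at h2
      norm_num at h2
      rwa [← ENNReal.ofReal_pow hB] at h2
    have h3 := (ENNReal.sum_le_tsum s).trans h1
    rw [← ENNReal.ofReal_sum_of_nonneg (fun i _ => by positivity)] at h3
    exact (ENNReal.ofReal_le_ofReal_iff (by positivity)).1 h3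
  refine le_of_tendsto (hg.tendsto_sum_nat.sub_const _).norm ?_
  filter_upwards [Filter.eventually_ge_atTop j] with n hn
  rw [← Finset.sum_Ico_eq_sub _ hn]
  refine le_of_sq_le_sq ?_ (by positivity)
  rw [norm_sq_sum_of_orthogonal v hv, mul_pow]
  have hw : ((2 : ℝ) ^ (-(r * (j : ℝ)))) ^ 2 = (2 : ℝ) ^ (-(2 * r * (j : ℝ))) := by
    rw [← Real.rpow_natCast, ← Real.rpow_mul (by norm_num)]
    congr 1
    push_cast
    ring
  rw [hw]
  refine le_trans ?_ (mul_le_mul_of_nonneg_left (hfin (Finset.Ico j n)) (by positivity))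
  rw [Finset.mul_sum]
  refine Finset.sum_le_sum fun i hi => ?_
  rw [← mul_assoc, ← Real.rpow_add (by norm_num)]
  refine le_mul_of_one_le_left (sq_nonneg _) (Real.one_le_rpow (by norm_num) ?_)
  have hji : (j : ℝ) ≤ i := by exact_mod_cast (Finset.mem_Ico.1 hi).1
  nlinarith

/-- The paper's estimate
`‖(U − U_j) f‖ ≤ 2^{-rj} (‖U‖_r + ‖U‖_0) ‖f‖_{A^{r,2}}` for the compressed operator
`U_j := Π_j U Π_j`, when `U` is bounded both on the Hilbert space and on the
approximation space `A^{r,2}` (whose possibly-infinite seminorm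
`N(g) = (∑' 2^{2ri} ‖Q_i g‖²)^{1/2}` is taken in `ℝ≥0∞`). -/
theorem compressed_operator_error
    {H : Type*} [NormedAddCommGroup H] [InnerProductSpace ℝ H] [CompleteSpace H]
    (r : ℝ) (hr : 0 < r) (Q : ℕ → H →L[ℝ] H)
    (horth : ∀ (g : H) (i k : ℕ), i ≠ k → ⟪Q i g, Q k g⟫ = 0)
    (hdecomp : ∀ g : H, HasSum (fun i => Q i g) g)
    (U : H →L[ℝ] H) (C₀ Cr : ℝ) (hC₀ : 0 ≤ C₀) (hCr : 0 ≤ Cr)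
    (hU0 : ∀ g : H, ‖U g‖ ≤ C₀ * ‖g‖)
    (hUr : ∀ g : H,
      (∑' i : ℕ, ENNReal.ofReal ((2 : ℝ) ^ (2 * r * (i : ℝ)) * ‖Q i g‖ ^ 2)) ^ (1 / 2 : ℝ)
          ≠ ⊤ →
      (∑' i : ℕ, ENNReal.ofReal ((2 : ℝ) ^ (2 * r * (i : ℝ)) * ‖Q i (U g)‖ ^ 2)) ^ (1 / 2 : ℝ)
        ≤ ENNReal.ofReal Cr *
          (∑' i : ℕ, ENNReal.ofReal ((2 : ℝ) ^ (2 * r * (i : ℝ)) * ‖Q i g‖ ^ 2)) ^ (1 / 2 : ℝ))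
    (f : H) (C : ℝ) (hC : 0 ≤ C)
    (hf : (∑' i : ℕ, ENNReal.ofReal ((2 : ℝ) ^ (2 * r * (i : ℝ)) * ‖Q i f‖ ^ 2)) ^ (1 / 2 : ℝ)
        ≤ ENNReal.ofReal C) :
    ∀ j : ℕ,
      ‖U f - ∑ i ∈ Finset.range j, Q i (U (∑ k ∈ Finset.range j, Q k f))‖ ≤
        (2 : ℝ) ^ (-(r * (j : ℝ))) * ((Cr + C₀) * C) := by
  intro j
  have hUf : (∑' i : ℕ, ENNReal.ofReal ((2 : ℝ) ^ (2 * r * (i : ℝ)) * ‖Q i (U f)‖ ^ 2))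
      ^ (1 / 2 : ℝ) ≤ ENNReal.ofReal (Cr * C) := by
    rw [ENNReal.ofReal_mul hCr]
    exact (hUr f (ne_top_of_le_ne_top ENNReal.ofReal_ne_top hf)).trans (by gcongr)
  have h1 := norm_block_tail_le r hr (fun i => Q i (U f)) (horth _) (U f) (hdecomp _) (Cr * C)
    (by positivity) hUf j
  have h2 := norm_block_tail_le r hr (fun i => Q i f) (horth _) f (hdecomp _) C hC hf j
  set p := ∑ k ∈ Finset.range j, Q k f
  have h3 := norm_block_sum_le (fun i => Q i (U (f - p))) (horth _) _ (hdecomp _) j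
  have hsplit : U f - ∑ i ∈ Finset.range j, Q i (U p) =
      (U f - ∑ i ∈ Finset.range j, Q i (U f)) + ∑ i ∈ Finset.range j, Q i (U (f - p)) := by
    simp only [map_sub, Finset.sum_sub_distrib]
    abel
  rw [hsplit]
  calc _ ≤ _ := norm_add_le _ _
    _ ≤ (2 : ℝ) ^ (-(r * (j : ℝ))) * (Cr * C) + C₀ * ((2 : ℝ) ^ (-(r * (j : ℝ))) * C) :=
        add_le_add h1 ((h3.trans (hU0 _)).trans (mul_le_mul_of_nonneg_left h2 hC₀))
    _ = _ := by ring
end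

section
/- Let (Ω, Σ, μ) be a measure space, Y : Ω → ℝ a nonnegative measurable function, m ≥ 1 a natural number, and M > 0. Suppose that for every ε > 0, μ {ω | ε ≤ Y ω} ≤ min 1 (2 · Real.exp (−(m : ℝ) · ε² / (2 M²))). Then ∫⁻ ω, ENNReal.ofReal ((Y ω)²) ∂μ ≤ ENNReal.ofReal ((2 + 2 · Real.log 2) · M² / m). (The tail-integration step in the proof of the paper's expected-error corollary: integrating the accuracy–confidence function AC(ε) = min(1, 2e^{-mε²/2M²}) yields an expected squared error of order M²/m.) -/
open MeasureTheory

/-!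
By the layer-cake formula, `∫ Y² dμ = ∫₀^∞ μ {Y² ≥ t} dt`, and `μ {Y² ≥ t} = μ {Y ≥ √t}` is at
most `min 1 (2 exp (-a t))` with `a = m / (2 M²)`. The two terms of the minimum cross at
`t₀ = log 2 / a`: the first contributes `t₀` on `(0, t₀]`, the second `1 / a` on `(t₀, ∞)`,
and `(1 + log 2) / a` is exactly the stated bound.
-/

/-- The integral of `min 1 (2 exp (-a t))` over `(0, ∞)` is at most `(1 + log 2) / a`. -/
lemma lintegral_min_one_two_exp_le {a : ℝ} (ha : 0 < a) :
    ∫⁻ t in Set.Ioi (0 : ℝ), ENNReal.ofReal (min 1 (2 * Real.exp (-a * t))) ≤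
      ENNReal.ofReal ((1 + Real.log 2) / a) := by
  have ht₀ : 0 ≤ Real.log 2 / a := div_nonneg (Real.log_nonneg one_le_two) ha.le
  have hhead : ∫⁻ t in Set.Ioc 0 (Real.log 2 / a),
      ENNReal.ofReal (min 1 (2 * Real.exp (-a * t))) ≤ ENNReal.ofReal (Real.log 2 / a) := by
    calc _ ≤ ∫⁻ _ in Set.Ioc 0 (Real.log 2 / a), (1 : ENNReal) :=
          lintegral_mono fun t => by
            rw [← ENNReal.ofReal_one]
            exact ENNReal.ofReal_le_ofReal (min_le_left _ _)
      _ = _ := by simp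
  have htail : ∫⁻ t in Set.Ioi (Real.log 2 / a),
      ENNReal.ofReal (min 1 (2 * Real.exp (-a * t))) ≤ ENNReal.ofReal (1 / a) := by
    calc _ ≤ ∫⁻ t in Set.Ioi (Real.log 2 / a), ENNReal.ofReal (2 * Real.exp (-a * t)) :=
          lintegral_mono fun t => ENNReal.ofReal_le_ofReal (min_le_right _ _)
      _ = ENNReal.ofReal (∫ t in Set.Ioi (Real.log 2 / a), 2 * Real.exp (-a * t)) :=
          (ofReal_integral_eq_lintegral_ofReal
            ((integrableOn_exp_mul_Ioi (neg_lt_zero.mpr ha) _).const_mul 2)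
            (Filter.Eventually.of_forall fun t => by positivity)).symm
      _ = ENNReal.ofReal (1 / a) := by
          rw [integral_const_mul, integral_exp_mul_Ioi (neg_lt_zero.mpr ha)]
          have : -a * (Real.log 2 / a) = -Real.log 2 := by field_simp
          rw [this, Real.exp_neg, Real.exp_log two_pos]
          congr 1
          field_simp
  rw [← Set.Ioc_union_Ioi_eq_Ioi ht₀]
  calc _ ≤ _ := lintegral_union_le _ _ _
    _ ≤ ENNReal.ofReal (Real.log 2 / a) + ENNReal.ofReal (1 / a) := add_le_add hhead htail
    _ = _ := by
      rw [← ENNReal.ofReal_add ht₀ (by positivity)]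
      congr 1
      ring

/-- The tail-integration step in the proof of the paper's expected-error corollary:
integrating the accuracy–confidence function `AC(ε) = min(1, 2e^{-mε²/(2M²)})` yields an
expected squared error of order `M²/m`. -/
theorem accuracy_confidence_integration
    {Ω : Type*} [MeasurableSpace Ω] (μ : Measure Ω)
    (Y : Ω → ℝ) (hY : Measurable Y) (hY0 : ∀ ω, 0 ≤ Y ω)
    (m : ℕ) (hm : 1 ≤ m) (M : ℝ) (hM : 0 < M)
    (h : ∀ ε : ℝ, 0 < ε →
      μ {ω | ε ≤ Y ω} ≤
        ENNReal.ofReal (min 1 (2 * Real.exp (-(m : ℝ) * ε ^ 2 / (2 * M ^ 2))))) :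
    ∫⁻ ω, ENNReal.ofReal ((Y ω) ^ 2) ∂μ ≤
      ENNReal.ofReal ((2 + 2 * Real.log 2) * M ^ 2 / m) := by
  have hm' : (0 : ℝ) < m := by exact_mod_cast hm
  have ha : 0 < (m : ℝ) / (2 * M ^ 2) := by positivity
  rw [lintegral_eq_lintegral_meas_le μ (Filter.Eventually.of_forall fun ω => sq_nonneg (Y ω))
    (hY.pow_const 2).aemeasurable]
  calc _ ≤ ∫⁻ t in Set.Ioi (0 : ℝ),
        ENNReal.ofReal (min 1 (2 * Real.exp (-((m : ℝ) / (2 * M ^ 2)) * t))) := by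
        refine setLIntegral_mono' measurableSet_Ioi fun t ht => ?_
        have ht' : (0 : ℝ) < t := ht
        have hset : {ω | t ≤ Y ω ^ 2} = {ω | √t ≤ Y ω} := by
          ext ω
          exact (Real.sqrt_le_left (hY0 ω)).symm
        have hexp : -((m : ℝ) / (2 * M ^ 2)) * t = -(m : ℝ) * √t ^ 2 / (2 * M ^ 2) := by
          rw [Real.sq_sqrt ht'.le]
          ring
        rw [hset, hexp]
        exact h (√t) (Real.sqrt_pos.mpr ht')
    _ ≤ _ := lintegral_min_one_two_exp_le ha
    _ = _ := by
        congr 1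
        field_simp
end
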